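/- Fix c > 0 and consider the optimization problem O: minimize Σ_{a=1}^K N_a over allocations N = (N_1,…,N_K) ∈ ℝ_{≥0}^K subject to W_a(N_1, N_a) ≥ c for every a ∈ {2,…,K}. Then O has a unique optimal solution N* = (N_1*,…,N_K*), and N* is characterized as the unique N ∈ ℝ_{≥0}^K satisfying simultaneously W_a(N_1, N_a) = c for every a ∈ {2,…,K} (all constraints tight) and Σ_{a=2}^K d(μ_1, x_{1,a}(N_1,N_a))/d(μ_a, x_{1,a}(N_1,N_a)) = 1. Moreover N_1* ≥ max_{a∈{2,…,K}} c/d(μ_1, μ_a) and N_a* ≥ c/d(μ_a, μ_1) for every a ∈ {2,…,K}. -/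

import Mathlib

open scoped BigOperators

/-- A single-parameter exponential family, given by the log-partition function `b`,
smooth with positive second derivative on an open interval `Θ`, together with the
inverse `θof` of `b'` on the set of means `S = b'(Θ)`. -/
structure SPEF where
  Θ : Set ℝ
  Θ_isOpen : IsOpen Θ
  Θ_ordConnected : Set.OrdConnected Θ
  Θ_nonempty : Θ.Nonempty
  b : ℝ → ℝ
  b_smooth : ContDiffOn ℝ (⊤ : ℕ∞) b Θ
  b_conv : ∀ t ∈ Θ, 0 < iteratedDeriv 2 b t
  θof : ℝ → ℝ
  θof_mem : ∀ μ ∈ deriv b '' Θ, θof μ ∈ Θ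
  θof_spec : ∀ μ ∈ deriv b '' Θ, deriv b (θof μ) = μ

namespace SPEF

/-- The set of means of the family. -/
def S (F : SPEF) : Set ℝ := deriv F.b '' F.Θ

/-- KL divergence `d(μ, x)` between the members of the family with means `μ` and `x`. -/
noncomputable def d (F : SPEF) (μ x : ℝ) : ℝ :=
  (F.θof μ - F.θof x) * μ - F.b (F.θof μ) + F.b (F.θof x)

end SPEF

/-- A `K`-armed bandit instance with arm distributions in a fixed SPEF; arm `0`
(the paper's arm `1`) is the unique best arm. -/
structure Bandit (K : ℕ) [NeZero K] extends SPEF where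
  two_le : 2 ≤ K
  μ : Fin K → ℝ
  μ_mem : ∀ a, μ a ∈ SPEF.S toSPEF
  μ_best : ∀ a : Fin K, a ≠ 0 → μ a < μ 0

namespace Bandit

variable {K : ℕ} [NeZero K]

/-- KL divergence of the underlying family. -/
noncomputable def d (M : Bandit K) : ℝ → ℝ → ℝ := M.toSPEF.d

/-- The weighted mean `x_{1,a}(N₁, N_a)`. -/
noncomputable def x1 (M : Bandit K) (a : Fin K) (N1 Na : ℝ) : ℝ :=
  (N1 * M.μ 0 + Na * M.μ a) / (N1 + Na)

/-- The index `W_a(N₁, N_a)` of an arm `a ≠ 1`. -/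
noncomputable def W (M : Bandit K) (a : Fin K) (N1 Na : ℝ) : ℝ :=
  N1 * M.d (M.μ 0) (M.x1 a N1 Na) + Na * M.d (M.μ a) (M.x1 a N1 Na)

/-- The set `{2, …, K}` of suboptimal arms. -/
def alt (K : ℕ) [NeZero K] : Finset (Fin K) := Finset.univ.filter (fun a => a ≠ 0)

/-- The anchor function `g(μ, N)`. -/
noncomputable def g (M : Bandit K) (Nv : Fin K → ℝ) : ℝ :=
  (∑ a ∈ alt K, M.d (M.μ 0) (M.x1 a (Nv 0) (Nv a)) / M.d (M.μ a) (M.x1 a (Nv 0) (Nv a))) - 1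

end Bandit

open Bandit

/-!
A divergence with the compensation identity
`n d(p, y) + m d(q, y) = (n d(p, x) + m d(q, x)) + (n + m) d(x, y)`, where `x` is the mean of
`p` and `q` with weights `n` and `m`, makes `W_a(n, m)` the minimum over `y` of the linear forms
`n d(μ₁, y) + m d(μ_a, y)`. Let `N` satisfy the first-order conditions and let `x_a` be its weighted
means. For every allocation `N'` the anchor condition gives
`∑ N'_a = ∑_{a ≠ 1} (N'_1 d(μ₁, x_a) + N'_a d(μ_a, x_a)) / d(μ_a, x_a)`,
and for feasible `N'` each numerator is at least `W_a(N'_1, N'_a) ≥ c`, its value at `N`. So `N` is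
optimal, and equality of the totals forces equal weighted means and indices, hence `N' = N`.

For existence, normalise `N_1 = 1`. The equation `W_a(1, m) = v` has a solution `m` depending
continuously on `v ∈ [0, d(μ₁, μ_a))`, the sum in the anchor condition vanishes at `v = 0` and
eventually exceeds `1`, so some `v > 0` satisfies it. As `W_a` is homogeneous of degree one and the
anchor condition of degree zero, rescaling by `c / v` finishes.
-/

open Filter Topology

section Inverse

variable {α β : Type*} [LinearOrder α] [TopologicalSpace α] [OrderTopology α]
  [LinearOrder β] [TopologicalSpace β] [OrderTopology β]

theorem continuousOn_of_strictMonoOn_of_ordConnected_image {f : α → β} {s : Set α}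
    (hf : StrictMonoOn f s) (hs : s.OrdConnected) (him : (f '' s).OrdConnected) :
    ContinuousOn f s := by
  rw [continuousOn_iff_continuous_domRestrict]
  exact continuous_subtype_val.comp (hf.orderIso f s).continuous

theorem continuousOn_of_rightInvOn_strictMonoOn {f : α → β} {g : β → α} {s : Set α} {t : Set β}
    (hf : StrictMonoOn f s) (hft : Set.MapsTo f s t) (hgs : Set.MapsTo g t s)
    (hfg : Set.RightInvOn g f t) (hs : s.OrdConnected) (ht : t.OrdConnected) :
    ContinuousOn g t := by
  have hg : StrictMonoOn g t := fun x hx y hy hxy => by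
    rwa [← hf.lt_iff_lt (hgs hx) (hgs hy), hfg hx, hfg hy]
  have him : g '' t = s := hgs.image_subset.antisymm fun x hx =>
    ⟨f x, hft hx, hf.injOn (hgs (hft hx)) hx (hfg (hft hx))⟩
  exact continuousOn_of_strictMonoOn_of_ordConnected_image hg ht (him ▸ hs)

end Inverse

section WeightedMean

/-- The mean of `p` and `q` with weights `n` and `m`; it is `0` when `n + m = 0`. -/
noncomputable def weightedMean (p q n m : ℝ) : ℝ := (n * p + m * q) / (n + m)

variable {p q n m n' m' k : ℝ}

theorem weightedMean_mem {S : Set ℝ} (hS : S.OrdConnected) (hp : p ∈ S) (hq : q ∈ S)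
    (hn : 0 ≤ n) (hm : 0 ≤ m) (h : 0 < n + m) : weightedMean p q n m ∈ S := by
  have hmem := convex_iff_div.1 hS.convex hp hq hn hm h
  rwa [smul_eq_mul, smul_eq_mul, div_mul_eq_mul_div, div_mul_eq_mul_div, ← add_div] at hmem

theorem add_mul_weightedMean (h : n + m ≠ 0) :
    (n + m) * weightedMean p q n m = n * p + m * q :=
  mul_div_cancel₀ _ h

theorem weightedMean_mul_mul (hk : k ≠ 0) :
    weightedMean p q (k * n) (k * m) = weightedMean p q n m := by
  rw [weightedMean, weightedMean, mul_assoc, mul_assoc, ← mul_add, ← mul_add,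
    mul_div_mul_left _ _ hk]

theorem weightedMean_eq_add_div (h : n + m ≠ 0) :
    weightedMean p q n m = q + n * (p - q) / (n + m) := by
  rw [weightedMean]
  field_simp
  ring

theorem weightedMean_ne_right (hpq : p ≠ q) (hn : n ≠ 0) (h : n + m ≠ 0) :
    weightedMean p q n m ≠ q := by
  rw [weightedMean_eq_add_div h, Ne, add_eq_left]
  exact div_ne_zero (mul_ne_zero hn (sub_ne_zero.2 hpq)) h

theorem mul_eq_mul_of_weightedMean_eq (hpq : p ≠ q) (h : n + m ≠ 0) (h' : n' + m' ≠ 0)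
    (hx : weightedMean p q n m = weightedMean p q n' m') : n * m' = n' * m := by
  rw [weightedMean, weightedMean, div_eq_div_iff h h'] at hx
  refine mul_right_cancel₀ (sub_ne_zero.2 hpq) ?_
  linear_combination hx

theorem continuousOn_weightedMean_one : ContinuousOn (weightedMean p q 1) (Set.Ici 0) := by
  unfold weightedMean
  refine ContinuousOn.div (by fun_prop) (by fun_prop) fun m hm => ?_
  exact (add_pos_of_pos_of_nonneg one_pos (Set.mem_Ici.1 hm)).ne'

theorem tendsto_weightedMean_atTop (p q n : ℝ) :
    Tendsto (weightedMean p q n) atTop (𝓝 q) := by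
  have hdiv : Tendsto (fun m => q + n * (p - q) / (n + m)) atTop (𝓝 (q + 0)) :=
    tendsto_const_nhds.add
      (tendsto_const_nhds.div_atTop (tendsto_atTop_add_const_left _ n tendsto_id))
  rw [add_zero] at hdiv
  refine hdiv.congr' ?_
  filter_upwards [eventually_gt_atTop (-n)] with m hm
  exact (weightedMean_eq_add_div (by linarith)).symm

end WeightedMean

section PairIndex

/-- The index `W` of two arms with means `p` and `q` and allocations `n` and `m`, for a
divergence `d`. -/
noncomputable def pairIndex (d : ℝ → ℝ → ℝ) (p q n m : ℝ) : ℝ :=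
  n * d p (weightedMean p q n m) + m * d q (weightedMean p q n m)

/-- The summand of the anchor function contributed by two arms with means `p` and `q` and
allocations `n` and `m`, for a divergence `d`. -/
noncomputable def anchorRatio (d : ℝ → ℝ → ℝ) (p q n m : ℝ) : ℝ :=
  d p (weightedMean p q n m) / d q (weightedMean p q n m)

variable {d : ℝ → ℝ → ℝ} {p q n m n' m' k : ℝ}

theorem pairIndex_mul_mul (hk : k ≠ 0) :
    pairIndex d p q (k * n) (k * m) = k * pairIndex d p q n m := by
  rw [pairIndex, pairIndex, weightedMean_mul_mul hk]
  ring

theorem anchorRatio_mul_mul (hk : k ≠ 0) :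
    anchorRatio d p q (k * n) (k * m) = anchorRatio d p q n m := by
  rw [anchorRatio, anchorRatio, weightedMean_mul_mul hk]

theorem pairIndex_zero_right (hp : d p p = 0) (n : ℝ) : pairIndex d p q n 0 = 0 := by
  rcases eq_or_ne n 0 with rfl | hn
  · simp [pairIndex]
  · simp [pairIndex, weightedMean, hn, hp]

theorem pairIndex_zero_left (hq : d q q = 0) (m : ℝ) : pairIndex d p q 0 m = 0 := by
  rcases eq_or_ne m 0 with rfl | hm
  · simp [pairIndex]
  · simp [pairIndex, weightedMean, hm, hq]

theorem eq_and_eq_of_weightedMean_eq_of_pairIndex_eq (hpq : p ≠ q)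
    (h : n + m ≠ 0) (h' : n' + m' ≠ 0) (hx : weightedMean p q n m = weightedMean p q n' m')
    (hW : pairIndex d p q n m = pairIndex d p q n' m') (hW0 : pairIndex d p q n m ≠ 0) :
    n = n' ∧ m = m' := by
  have hcross := mul_eq_mul_of_weightedMean_eq hpq h h' hx
  have hindex : pairIndex d p q n m =
      n' * d p (weightedMean p q n m) + m' * d q (weightedMean p q n m) := by
    rw [hW, pairIndex, hx]
  constructor <;> refine mul_right_cancel₀ hW0 ?_
  · nth_rw 1 [hindex]
    rw [pairIndex]
    linear_combination d q (weightedMean p q n m) * hcross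
  · nth_rw 1 [hindex]
    rw [pairIndex]
    linear_combination -d p (weightedMean p q n m) * hcross

end PairIndex

/-- The properties of the Bregman divergence of a strictly convex function on an interval `S`
on which the optimization problem depends. By the compensation identity, the weighted mean
minimizes the weighted sum of divergences. -/
structure IsBregmanDivergence (S : Set ℝ) (d : ℝ → ℝ → ℝ) : Prop where
  ordConnected : S.OrdConnected
  self_eq_zero : ∀ x ∈ S, d x x = 0
  pos : ∀ x ∈ S, ∀ y ∈ S, x ≠ y → 0 < d x y
  continuousOn : ∀ x ∈ S, ContinuousOn (d x) S
  compensation : ∀ p ∈ S, ∀ q ∈ S, ∀ y ∈ S, ∀ n m : ℝ, 0 ≤ n → 0 ≤ m → 0 < n + m →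
    n * d p y + m * d q y = pairIndex d p q n m + (n + m) * d (weightedMean p q n m) y

namespace IsBregmanDivergence

variable {S : Set ℝ} {d : ℝ → ℝ → ℝ} {p q n m y : ℝ}

theorem nonneg (hd : IsBregmanDivergence S d) (hp : p ∈ S) (hy : y ∈ S) : 0 ≤ d p y := by
  rcases eq_or_ne p y with rfl | h
  · exact (hd.self_eq_zero p hp).ge
  · exact (hd.pos p hp y hy h).le

theorem pairIndex_nonneg (hd : IsBregmanDivergence S d) (hp : p ∈ S) (hq : q ∈ S)
    (hn : 0 ≤ n) (hm : 0 ≤ m) (h : 0 < n + m) : 0 ≤ pairIndex d p q n m := by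
  have hx := weightedMean_mem hd.ordConnected hp hq hn hm h
  exact add_nonneg (mul_nonneg hn (hd.nonneg hp hx)) (mul_nonneg hm (hd.nonneg hq hx))

theorem pos_of_pairIndex_pos (hd : IsBregmanDivergence S d) (hp : p ∈ S) (hq : q ∈ S)
    (hn : 0 ≤ n) (hm : 0 ≤ m) (hW : 0 < pairIndex d p q n m) : 0 < n ∧ 0 < m := by
  constructor
  · refine hn.lt_of_ne' fun h => hW.ne' ?_
    rw [h, pairIndex_zero_left (hd.self_eq_zero q hq)]
  · refine hm.lt_of_ne' fun h => hW.ne' ?_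
    rw [h, pairIndex_zero_right (hd.self_eq_zero p hp)]

theorem pairIndex_le (hd : IsBregmanDivergence S d) (hp : p ∈ S) (hq : q ∈ S) (hy : y ∈ S)
    (hn : 0 ≤ n) (hm : 0 ≤ m) (h : 0 < n + m) :
    pairIndex d p q n m ≤ n * d p y + m * d q y := by
  rw [hd.compensation p hp q hq y hy n m hn hm h]
  exact le_add_of_nonneg_right
    (mul_nonneg h.le (hd.nonneg (weightedMean_mem hd.ordConnected hp hq hn hm h) hy))

theorem weightedMean_eq_of_le_pairIndex (hd : IsBregmanDivergence S d) (hp : p ∈ S)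
    (hq : q ∈ S) (hy : y ∈ S) (hn : 0 ≤ n) (hm : 0 ≤ m) (h : 0 < n + m)
    (hle : n * d p y + m * d q y ≤ pairIndex d p q n m) : weightedMean p q n m = y := by
  by_contra hne
  have hpos := mul_pos h
    (hd.pos _ (weightedMean_mem hd.ordConnected hp hq hn hm h) y hy hne)
  rw [hd.compensation p hp q hq y hy n m hn hm h] at hle
  linarith

theorem pairIndex_le_mul_left (hd : IsBregmanDivergence S d) (hp : p ∈ S) (hq : q ∈ S)
    (hn : 0 ≤ n) (hm : 0 ≤ m) (h : 0 < n + m) : pairIndex d p q n m ≤ n * d p q := by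
  simpa [hd.self_eq_zero q hq] using hd.pairIndex_le hp hq hq hn hm h

theorem pairIndex_le_mul_right (hd : IsBregmanDivergence S d) (hp : p ∈ S) (hq : q ∈ S)
    (hn : 0 ≤ n) (hm : 0 ≤ m) (h : 0 < n + m) : pairIndex d p q n m ≤ m * d q p := by
  simpa [hd.self_eq_zero p hp] using hd.pairIndex_le hp hq hp hn hm h

theorem d_weightedMean_pos (hd : IsBregmanDivergence S d) (hp : p ∈ S) (hq : q ∈ S)
    (hpq : p ≠ q) (hn : 0 < n) (hm : 0 ≤ m) : 0 < d q (weightedMean p q n m) := by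
  have h : 0 < n + m := add_pos_of_pos_of_nonneg hn hm
  exact hd.pos q hq _ (weightedMean_mem hd.ordConnected hp hq hn.le hm h)
    (weightedMean_ne_right hpq hn.ne' h.ne').symm

theorem strictMonoOn_pairIndex (hd : IsBregmanDivergence S d) (hp : p ∈ S) (hq : q ∈ S)
    (hpq : p ≠ q) (hn : 0 < n) : StrictMonoOn (pairIndex d p q n) (Set.Ici 0) := by
  intro m hm m' hm' hlt
  rw [Set.mem_Ici] at hm hm'
  have h : 0 < n + m := add_pos_of_pos_of_nonneg hn hm
  have h' : 0 < n + m' := add_pos_of_pos_of_nonneg hn hm'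
  calc pairIndex d p q n m
      ≤ n * d p (weightedMean p q n m') + m * d q (weightedMean p q n m') :=
        hd.pairIndex_le hp hq (weightedMean_mem hd.ordConnected hp hq hn.le hm' h') hn.le hm h
    _ < pairIndex d p q n m' := by
        rw [pairIndex]
        gcongr
        exact hd.d_weightedMean_pos hp hq hpq hn hm'

section UnitWeight

theorem weightedMean_one_mem (hd : IsBregmanDivergence S d) (hp : p ∈ S) (hq : q ∈ S)
    (hm : 0 ≤ m) : weightedMean p q 1 m ∈ S :=
  weightedMean_mem hd.ordConnected hp hq zero_le_one hm (add_pos_of_pos_of_nonneg one_pos hm)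

theorem continuousOn_d_weightedMean (hd : IsBregmanDivergence S d) (hp : p ∈ S) (hq : q ∈ S)
    (hy : y ∈ S) : ContinuousOn (fun m => d y (weightedMean p q 1 m)) (Set.Ici 0) :=
  (hd.continuousOn y hy).comp continuousOn_weightedMean_one
    fun _ hm => hd.weightedMean_one_mem hp hq hm

theorem tendsto_d_weightedMean (hd : IsBregmanDivergence S d) (hp : p ∈ S) (hq : q ∈ S)
    (hy : y ∈ S) : Tendsto (fun m => d y (weightedMean p q 1 m)) atTop (𝓝 (d y q)) := by
  refine (hd.continuousOn y hy q hq).tendsto.comp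
    (tendsto_nhdsWithin_iff.2 ⟨tendsto_weightedMean_atTop p q 1, ?_⟩)
  filter_upwards [eventually_ge_atTop 0] with m hm
  exact hd.weightedMean_one_mem hp hq hm

theorem continuousOn_pairIndex (hd : IsBregmanDivergence S d) (hp : p ∈ S) (hq : q ∈ S) :
    ContinuousOn (pairIndex d p q 1) (Set.Ici 0) :=
  (continuousOn_const.mul (hd.continuousOn_d_weightedMean hp hq hp)).add
    (continuousOn_id.mul (hd.continuousOn_d_weightedMean hp hq hq))

theorem tendsto_pairIndex (hd : IsBregmanDivergence S d) (hp : p ∈ S) (hq : q ∈ S) :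
    Tendsto (pairIndex d p q 1) atTop (𝓝 (d p q)) := by
  refine tendsto_of_tendsto_of_tendsto_of_le_of_le' (hd.tendsto_d_weightedMean hp hq hp)
    tendsto_const_nhds ?_ ?_ <;> filter_upwards [eventually_ge_atTop 0] with m hm
  · rw [pairIndex, one_mul]
    exact le_add_of_nonneg_right
      (mul_nonneg hm (hd.nonneg hq (hd.weightedMean_one_mem hp hq hm)))
  · simpa using hd.pairIndex_le_mul_left hp hq zero_le_one hm
      (add_pos_of_pos_of_nonneg one_pos hm)

theorem mapsTo_pairIndex (hd : IsBregmanDivergence S d) (hp : p ∈ S) (hq : q ∈ S)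
    (hpq : p ≠ q) : Set.MapsTo (pairIndex d p q 1) (Set.Ici 0) (Set.Ico 0 (d p q)) := by
  intro m hm
  have hm' : 0 ≤ m + 1 := add_nonneg hm zero_le_one
  refine ⟨hd.pairIndex_nonneg hp hq zero_le_one hm (add_pos_of_pos_of_nonneg one_pos hm), ?_⟩
  calc pairIndex d p q 1 m < pairIndex d p q 1 (m + 1) :=
        hd.strictMonoOn_pairIndex hp hq hpq one_pos hm hm' (lt_add_one m)
    _ ≤ 1 * d p q :=
        hd.pairIndex_le_mul_left hp hq zero_le_one hm' (add_pos_of_pos_of_nonneg one_pos hm')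
    _ = d p q := one_mul _

theorem surjOn_pairIndex (hd : IsBregmanDivergence S d) (hp : p ∈ S) (hq : q ∈ S) :
    Set.SurjOn (pairIndex d p q 1) (Set.Ici 0) (Set.Ico 0 (d p q)) := by
  have hIVT := isPreconnected_Ici.intermediate_value_Ico (Set.self_mem_Ici (a := (0 : ℝ)))
    (le_principal_iff.2 (Ici_mem_atTop 0)) (hd.continuousOn_pairIndex hp hq)
    (hd.tendsto_pairIndex hp hq)
  rwa [pairIndex_zero_right (hd.self_eq_zero p hp)] at hIVT

theorem continuousOn_anchorRatio (hd : IsBregmanDivergence S d) (hp : p ∈ S) (hq : q ∈ S)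
    (hpq : p ≠ q) : ContinuousOn (anchorRatio d p q 1) (Set.Ici 0) :=
  (hd.continuousOn_d_weightedMean hp hq hp).div (hd.continuousOn_d_weightedMean hp hq hq)
    fun _ hm => (hd.d_weightedMean_pos hp hq hpq one_pos hm).ne'

theorem anchorRatio_nonneg (hd : IsBregmanDivergence S d) (hp : p ∈ S) (hq : q ∈ S)
    (hm : 0 ≤ m) : 0 ≤ anchorRatio d p q 1 m :=
  div_nonneg (hd.nonneg hp (hd.weightedMean_one_mem hp hq hm))
    (hd.nonneg hq (hd.weightedMean_one_mem hp hq hm))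

theorem anchorRatio_zero (hd : IsBregmanDivergence S d) (hp : p ∈ S) :
    anchorRatio d p q 1 0 = 0 := by
  simp [anchorRatio, weightedMean, hd.self_eq_zero p hp]

theorem exists_one_le_anchorRatio (hd : IsBregmanDivergence S d) (hp : p ∈ S) (hq : q ∈ S)
    (hpq : p ≠ q) : ∃ m, 0 ≤ m ∧ 1 ≤ anchorRatio d p q 1 m := by
  have hlt : d q q < d p q := by
    rw [hd.self_eq_zero q hq]
    exact hd.pos p hp q hq hpq
  obtain ⟨m, hm, hle⟩ := ((eventually_ge_atTop 0).and ((hd.tendsto_d_weightedMean hp hq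
    hq).eventually_lt (hd.tendsto_d_weightedMean hp hq hp) hlt)).exists
  exact ⟨m, hm, (one_le_div₀ (hd.d_weightedMean_pos hp hq hpq one_pos hm)).2 hle.le⟩

end UnitWeight

end IsBregmanDivergence

/-- The allocation of the arm with mean `q` for which the index is `v` when the arm with mean `p`
has allocation `1`; it is meaningful for `0 ≤ v < d p q`. -/
noncomputable def tightWeight (d : ℝ → ℝ → ℝ) (p q : ℝ) : ℝ → ℝ :=
  Function.invFunOn (pairIndex d p q 1) (Set.Ici 0)

namespace IsBregmanDivergence

variable {S : Set ℝ} {d : ℝ → ℝ → ℝ} {p q m v : ℝ}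

theorem tightWeight_nonneg (hd : IsBregmanDivergence S d) (hp : p ∈ S) (hq : q ∈ S)
    (hv : v ∈ Set.Ico 0 (d p q)) : 0 ≤ tightWeight d p q v :=
  (hd.surjOn_pairIndex hp hq).mapsTo_invFunOn hv

theorem pairIndex_tightWeight (hd : IsBregmanDivergence S d) (hp : p ∈ S) (hq : q ∈ S)
    (hv : v ∈ Set.Ico 0 (d p q)) : pairIndex d p q 1 (tightWeight d p q v) = v :=
  (hd.surjOn_pairIndex hp hq).rightInvOn_invFunOn hv

theorem tightWeight_pairIndex (hd : IsBregmanDivergence S d) (hp : p ∈ S) (hq : q ∈ S)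
    (hpq : p ≠ q) (hm : 0 ≤ m) : tightWeight d p q (pairIndex d p q 1 m) = m :=
  (hd.strictMonoOn_pairIndex hp hq hpq one_pos).injOn.leftInvOn_invFunOn hm

theorem tightWeight_zero (hd : IsBregmanDivergence S d) (hp : p ∈ S) (hq : q ∈ S)
    (hpq : p ≠ q) : tightWeight d p q 0 = 0 := by
  simpa only [pairIndex_zero_right (hd.self_eq_zero p hp)] using
    hd.tightWeight_pairIndex hp hq hpq le_rfl

theorem continuousOn_tightWeight (hd : IsBregmanDivergence S d) (hp : p ∈ S) (hq : q ∈ S)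
    (hpq : p ≠ q) : ContinuousOn (tightWeight d p q) (Set.Ico 0 (d p q)) :=
  continuousOn_of_rightInvOn_strictMonoOn (hd.strictMonoOn_pairIndex hp hq hpq one_pos)
    (hd.mapsTo_pairIndex hp hq hpq) (fun _ => hd.tightWeight_nonneg hp hq)
    (fun _ => hd.pairIndex_tightWeight hp hq) Set.ordConnected_Ici Set.ordConnected_Ico

theorem continuousOn_anchorRatio_tightWeight (hd : IsBregmanDivergence S d) (hp : p ∈ S)
    (hq : q ∈ S) (hpq : p ≠ q) :
    ContinuousOn (fun v => anchorRatio d p q 1 (tightWeight d p q v)) (Set.Ico 0 (d p q)) :=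
  (hd.continuousOn_anchorRatio hp hq hpq).comp (hd.continuousOn_tightWeight hp hq hpq)
    fun _ => hd.tightWeight_nonneg hp hq

end IsBregmanDivergence

theorem add_sum_eq_sum_div_of_sum_div_eq_one {ι : Type*} {s : Finset ι}
    {A B : ι → ℝ} (hB : ∀ a ∈ s, B a ≠ 0) (hsum : ∑ a ∈ s, A a / B a = 1) (n : ℝ)
    (N : ι → ℝ) :
    n + ∑ a ∈ s, N a = ∑ a ∈ s, (n * A a + N a * B a) / B a := by
  have hterm : ∀ a ∈ s, (n * A a + N a * B a) / B a = n * (A a / B a) + N a := fun a ha => by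
    rw [add_div, mul_div_assoc, mul_div_cancel_right₀ _ (hB a ha)]
  rw [Finset.sum_congr rfl hterm, Finset.sum_add_distrib, ← Finset.mul_sum, hsum, mul_one]

section FirstOrder

variable {ι : Type*} [Fintype ι] [DecidableEq ι]

/-- The arms other than the reference arm `i₀`. -/
def challengers (i₀ : ι) : Finset ι := Finset.univ.filter (fun a => a ≠ i₀)

/-- The first-order conditions on an allocation `N` for the reference arm `i₀` and the level `c`:
all index constraints are tight and the anchor condition holds. -/
def IsFirstOrder (d : ℝ → ℝ → ℝ) (μ : ι → ℝ) (i₀ : ι) (c : ℝ) (N : ι → ℝ) : Prop :=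
  (∀ a, 0 ≤ N a) ∧ (∀ a ∈ challengers i₀, pairIndex d (μ i₀) (μ a) (N i₀) (N a) = c) ∧
    ∑ a ∈ challengers i₀, anchorRatio d (μ i₀) (μ a) (N i₀) (N a) = 1

variable {S : Set ℝ} {d : ℝ → ℝ → ℝ} {μ : ι → ℝ} {i₀ a : ι} {c k : ℝ} {N N' : ι → ℝ}

theorem mem_challengers : a ∈ challengers i₀ ↔ a ≠ i₀ := by
  simp [challengers]

theorem challengers_nonempty [Nontrivial ι] (i₀ : ι) : (challengers i₀).Nonempty :=
  (exists_ne i₀).imp fun _ => mem_challengers.2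

theorem add_sum_challengers (i₀ : ι) (N : ι → ℝ) :
    N i₀ + ∑ a ∈ challengers i₀, N a = ∑ a, N a := by
  rw [challengers, Finset.filter_ne', Finset.add_sum_erase _ _ (Finset.mem_univ i₀)]

theorem IsFirstOrder.smul (hN : IsFirstOrder d μ i₀ c N) (hk : 0 < k) :
    IsFirstOrder d μ i₀ (k * c) (k • N) := by
  refine ⟨fun a => mul_nonneg hk.le (hN.1 a), fun a ha => ?_, ?_⟩
  · simp only [Pi.smul_apply, smul_eq_mul]
    rw [pairIndex_mul_mul hk.ne', hN.2.1 a ha]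
  · simpa only [Pi.smul_apply, smul_eq_mul, anchorRatio_mul_mul hk.ne'] using hN.2.2

theorem IsBregmanDivergence.exists_sum_anchorRatio_tightWeight_eq_one [Nontrivial ι]
    (hd : IsBregmanDivergence S d) (hμ : ∀ a, μ a ∈ S) (hne : ∀ a ≠ i₀, μ a ≠ μ i₀) :
    ∃ v > 0, (∀ a ∈ challengers i₀, v < d (μ i₀) (μ a)) ∧
      ∑ a ∈ challengers i₀,
        anchorRatio d (μ i₀) (μ a) 1 (tightWeight d (μ i₀) (μ a) v) = 1 := by
  have hne' : ∀ a ∈ challengers i₀, μ i₀ ≠ μ a := fun a ha => (hne a (mem_challengers.1 ha)).symm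
  obtain ⟨a₀, ha₀, hmin⟩ :=
    (challengers i₀).exists_min_image (fun a => d (μ i₀) (μ a)) (challengers_nonempty i₀)
  obtain ⟨m, hm, hone⟩ := hd.exists_one_le_anchorRatio (hμ i₀) (hμ a₀) (hne' a₀ ha₀)
  obtain ⟨hb₀, hb⟩ := hd.mapsTo_pairIndex (hμ i₀) (hμ a₀) (hne' a₀ ha₀) hm
  set b := pairIndex d (μ i₀) (μ a₀) 1 m with hbm
  have hsub : ∀ a ∈ challengers i₀, Set.Icc 0 b ⊆ Set.Ico 0 (d (μ i₀) (μ a)) := fun a ha =>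
    Set.Icc_subset_Ico_right (hb.trans_le (hmin a ha))
  have hcont : ContinuousOn (fun v => ∑ a ∈ challengers i₀,
      anchorRatio d (μ i₀) (μ a) 1 (tightWeight d (μ i₀) (μ a) v)) (Set.Icc 0 b) :=
    continuousOn_finsetSum _ fun a ha => (hd.continuousOn_anchorRatio_tightWeight (hμ i₀) (hμ a)
      (hne' a ha)).mono (hsub a ha)
  have hzero : ∑ a ∈ challengers i₀,
      anchorRatio d (μ i₀) (μ a) 1 (tightWeight d (μ i₀) (μ a) 0) = 0 :=
    Finset.sum_eq_zero fun a ha => by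
      rw [hd.tightWeight_zero (hμ i₀) (hμ a) (hne' a ha), hd.anchorRatio_zero (hμ i₀)]
  have hlarge : 1 ≤ ∑ a ∈ challengers i₀,
      anchorRatio d (μ i₀) (μ a) 1 (tightWeight d (μ i₀) (μ a) b) := by
    rw [← hd.tightWeight_pairIndex (hμ i₀) (hμ a₀) (hne' a₀ ha₀) hm, ← hbm] at hone
    refine hone.trans (Finset.single_le_sum (f := fun a =>
      anchorRatio d (μ i₀) (μ a) 1 (tightWeight d (μ i₀) (μ a) b)) (fun a ha => ?_) ha₀)
    exact hd.anchorRatio_nonneg (hμ i₀) (hμ a)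
      (hd.tightWeight_nonneg (hμ i₀) (hμ a) (hsub a ha ⟨hb₀, le_rfl⟩))
  obtain ⟨v, hv, hsum⟩ := intermediate_value_Ioc hb₀ hcont ⟨hzero.trans_lt one_pos, hlarge⟩
  exact ⟨v, hv.1, fun a ha => (hsub a ha ⟨hv.1.le, hv.2⟩).2, hsum⟩

theorem IsBregmanDivergence.exists_isFirstOrder [Nontrivial ι] (hd : IsBregmanDivergence S d)
    (hμ : ∀ a, μ a ∈ S) (hne : ∀ a ≠ i₀, μ a ≠ μ i₀) (hc : 0 < c) :
    ∃ N, IsFirstOrder d μ i₀ c N := by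
  obtain ⟨v, hv, hlt, hsum⟩ := hd.exists_sum_anchorRatio_tightWeight_eq_one hμ hne
  let N := Function.update (fun a => tightWeight d (μ i₀) (μ a) v) i₀ 1
  have hN₀ : N i₀ = 1 := Function.update_self ..
  have hNa : ∀ a ∈ challengers i₀, N a = tightWeight d (μ i₀) (μ a) v := fun a ha =>
    Function.update_of_ne (mem_challengers.1 ha) ..
  have hN : IsFirstOrder d μ i₀ v N := by
    refine ⟨fun a => ?_, fun a ha => ?_, ?_⟩
    · rcases eq_or_ne a i₀ with rfl | ha
      · exact hN₀ ▸ zero_le_one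
      · have ha := mem_challengers.2 ha
        exact hNa a ha ▸ hd.tightWeight_nonneg (hμ i₀) (hμ a) ⟨hv.le, hlt a ha⟩
    · rw [hN₀, hNa a ha, hd.pairIndex_tightWeight (hμ i₀) (hμ a) ⟨hv.le, hlt a ha⟩]
    · rw [← hsum]
      exact Finset.sum_congr rfl fun a ha => by rw [hN₀, hNa a ha]
  exact ⟨(c / v) • N, by simpa only [div_mul_cancel₀ c hv.ne'] using hN.smul (div_pos hc hv)⟩

namespace IsFirstOrder

theorem pos (hN : IsFirstOrder d μ i₀ c N) (hd : IsBregmanDivergence S d) (hμ : ∀ a, μ a ∈ S)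
    (hc : 0 < c) (ha : a ∈ challengers i₀) : 0 < N i₀ ∧ 0 < N a :=
  hd.pos_of_pairIndex_pos (hμ i₀) (hμ a) (hN.1 i₀) (hN.1 a) ((hN.2.1 a ha).symm ▸ hc)

theorem weightedMean_mem (hN : IsFirstOrder d μ i₀ c N) (hd : IsBregmanDivergence S d)
    (hμ : ∀ a, μ a ∈ S) (hc : 0 < c) (ha : a ∈ challengers i₀) :
    weightedMean (μ i₀) (μ a) (N i₀) (N a) ∈ S := by
  obtain ⟨hn, hm⟩ := hN.pos hd hμ hc ha
  exact _root_.weightedMean_mem hd.ordConnected (hμ i₀) (hμ a) hn.le hm.le (add_pos hn hm)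

theorem d_weightedMean_pos (hN : IsFirstOrder d μ i₀ c N) (hd : IsBregmanDivergence S d)
    (hμ : ∀ a, μ a ∈ S) (hne : ∀ a ≠ i₀, μ a ≠ μ i₀) (hc : 0 < c) (ha : a ∈ challengers i₀) :
    0 < d (μ a) (weightedMean (μ i₀) (μ a) (N i₀) (N a)) := by
  obtain ⟨hn, hm⟩ := hN.pos hd hμ hc ha
  exact hd.d_weightedMean_pos (hμ i₀) (hμ a) (hne a (mem_challengers.1 ha)).symm hn hm.le

theorem sum_eq (hN : IsFirstOrder d μ i₀ c N) (hd : IsBregmanDivergence S d)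
    (hμ : ∀ a, μ a ∈ S) (hne : ∀ a ≠ i₀, μ a ≠ μ i₀) (hc : 0 < c) (N' : ι → ℝ) :
    ∑ a, N' a = ∑ a ∈ challengers i₀,
      (N' i₀ * d (μ i₀) (weightedMean (μ i₀) (μ a) (N i₀) (N a)) +
        N' a * d (μ a) (weightedMean (μ i₀) (μ a) (N i₀) (N a))) /
          d (μ a) (weightedMean (μ i₀) (μ a) (N i₀) (N a)) := by
  rw [← add_sum_challengers i₀]
  exact add_sum_eq_sum_div_of_sum_div_eq_one
    (fun a ha => (hN.d_weightedMean_pos hd hμ hne hc ha).ne') hN.2.2 _ _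

theorem sum_self (hN : IsFirstOrder d μ i₀ c N) (hd : IsBregmanDivergence S d)
    (hμ : ∀ a, μ a ∈ S) (hne : ∀ a ≠ i₀, μ a ≠ μ i₀) (hc : 0 < c) :
    ∑ a, N a = ∑ a ∈ challengers i₀,
      c / d (μ a) (weightedMean (μ i₀) (μ a) (N i₀) (N a)) := by
  rw [hN.sum_eq hd hμ hne hc N]
  exact Finset.sum_congr rfl fun a ha => congrArg (· / _) (hN.2.1 a ha)

theorem pairIndex_le (hN : IsFirstOrder d μ i₀ c N) (hd : IsBregmanDivergence S d)
    (hμ : ∀ a, μ a ∈ S) (hc : 0 < c) (h0 : ∀ a, 0 ≤ N' a)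
    (hW : ∀ a ∈ challengers i₀, c ≤ pairIndex d (μ i₀) (μ a) (N' i₀) (N' a))
    (ha : a ∈ challengers i₀) :
    pairIndex d (μ i₀) (μ a) (N' i₀) (N' a) ≤
      N' i₀ * d (μ i₀) (weightedMean (μ i₀) (μ a) (N i₀) (N a)) +
        N' a * d (μ a) (weightedMean (μ i₀) (μ a) (N i₀) (N a)) := by
  obtain ⟨hn, hm⟩ :=
    hd.pos_of_pairIndex_pos (hμ i₀) (hμ a) (h0 i₀) (h0 a) (hc.trans_le (hW a ha))
  exact hd.pairIndex_le (hμ i₀) (hμ a) (hN.weightedMean_mem hd hμ hc ha) hn.le hm.le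
    (add_pos hn hm)

theorem sum_le (hN : IsFirstOrder d μ i₀ c N) (hd : IsBregmanDivergence S d)
    (hμ : ∀ a, μ a ∈ S) (hne : ∀ a ≠ i₀, μ a ≠ μ i₀) (hc : 0 < c) (h0 : ∀ a, 0 ≤ N' a)
    (hW : ∀ a ∈ challengers i₀, c ≤ pairIndex d (μ i₀) (μ a) (N' i₀) (N' a)) :
    ∑ a, N a ≤ ∑ a, N' a := by
  rw [hN.sum_self hd hμ hne hc, hN.sum_eq hd hμ hne hc N']
  exact Finset.sum_le_sum fun a ha => div_le_div_of_nonneg_right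
    ((hW a ha).trans (hN.pairIndex_le hd hμ hc h0 hW ha))
    (hN.d_weightedMean_pos hd hμ hne hc ha).le

theorem eq_of_sum_eq [Nontrivial ι] (hN : IsFirstOrder d μ i₀ c N)
    (hd : IsBregmanDivergence S d) (hμ : ∀ a, μ a ∈ S) (hne : ∀ a ≠ i₀, μ a ≠ μ i₀)
    (hc : 0 < c) (h0 : ∀ a, 0 ≤ N' a)
    (hW : ∀ a ∈ challengers i₀, c ≤ pairIndex d (μ i₀) (μ a) (N' i₀) (N' a))
    (hsum : ∑ a, N' a = ∑ a, N a) : N' = N := by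
  rw [hN.sum_self hd hμ hne hc, hN.sum_eq hd hμ hne hc N'] at hsum
  have hterm := (Finset.sum_eq_sum_iff_of_le fun a ha => div_le_div_of_nonneg_right
    ((hW a ha).trans (hN.pairIndex_le hd hμ hc h0 hW ha))
    (hN.d_weightedMean_pos hd hμ hne hc ha).le).1 hsum.symm
  have hcoord : ∀ a ∈ challengers i₀, N' i₀ = N i₀ ∧ N' a = N a := by
    intro a ha
    have hWpos := hc.trans_le (hW a ha)
    obtain ⟨hn, hm⟩ := hN.pos hd hμ hc ha
    obtain ⟨hn', hm'⟩ := hd.pos_of_pairIndex_pos (hμ i₀) (hμ a) (h0 i₀) (h0 a) hWpos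
    have heq := (div_left_inj' (hN.d_weightedMean_pos hd hμ hne hc ha).ne').1 (hterm a ha)
    have hmean := hd.weightedMean_eq_of_le_pairIndex (hμ i₀) (hμ a)
      (hN.weightedMean_mem hd hμ hc ha) hn'.le hm'.le (add_pos hn' hm') (heq ▸ hW a ha)
    have htight : pairIndex d (μ i₀) (μ a) (N' i₀) (N' a) = c :=
      ((hN.pairIndex_le hd hμ hc h0 hW ha).trans_eq heq.symm).antisymm (hW a ha)
    exact eq_and_eq_of_weightedMean_eq_of_pairIndex_eq (hne a (mem_challengers.1 ha)).symm
      (add_pos hn' hm').ne' (add_pos hn hm).ne' hmean (htight.trans (hN.2.1 a ha).symm) hWpos.ne'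
  obtain ⟨a₀, ha₀⟩ := challengers_nonempty i₀
  funext a
  rcases eq_or_ne a i₀ with rfl | ha
  · exact (hcoord a₀ ha₀).1
  · exact (hcoord a (mem_challengers.2 ha)).2

theorem unique [Nontrivial ι] (hN : IsFirstOrder d μ i₀ c N) (hN' : IsFirstOrder d μ i₀ c N')
    (hd : IsBregmanDivergence S d) (hμ : ∀ a, μ a ∈ S) (hne : ∀ a ≠ i₀, μ a ≠ μ i₀)
    (hc : 0 < c) : N' = N := by
  have hle := hN.sum_le hd hμ hne hc hN'.1 fun a ha => (hN'.2.1 a ha).ge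
  have hge := hN'.sum_le hd hμ hne hc hN.1 fun a ha => (hN.2.1 a ha).ge
  exact hN.eq_of_sum_eq hd hμ hne hc hN'.1 (fun a ha => (hN'.2.1 a ha).ge) (hge.antisymm hle)

theorem div_le_reference (hN : IsFirstOrder d μ i₀ c N) (hd : IsBregmanDivergence S d)
    (hμ : ∀ a, μ a ∈ S) (hne : ∀ a ≠ i₀, μ a ≠ μ i₀) (hc : 0 < c) (ha : a ∈ challengers i₀) :
    c / d (μ i₀) (μ a) ≤ N i₀ := by
  obtain ⟨hn, hm⟩ := hN.pos hd hμ hc ha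
  have hpos := hd.pos _ (hμ i₀) _ (hμ a) (hne a (mem_challengers.1 ha)).symm
  rw [div_le_iff₀ hpos, ← hN.2.1 a ha]
  exact hd.pairIndex_le_mul_left (hμ i₀) (hμ a) hn.le hm.le (add_pos hn hm)

theorem div_le_challenger (hN : IsFirstOrder d μ i₀ c N) (hd : IsBregmanDivergence S d)
    (hμ : ∀ a, μ a ∈ S) (hne : ∀ a ≠ i₀, μ a ≠ μ i₀) (hc : 0 < c) (ha : a ∈ challengers i₀) :
    c / d (μ a) (μ i₀) ≤ N a := by
  obtain ⟨hn, hm⟩ := hN.pos hd hμ hc ha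
  have hpos := hd.pos _ (hμ a) _ (hμ i₀) (hne a (mem_challengers.1 ha))
  rw [div_le_iff₀ hpos, ← hN.2.1 a ha]
  exact hd.pairIndex_le_mul_right (hμ i₀) (hμ a) hn.le hm.le (add_pos hn hm)

end IsFirstOrder

theorem statement_1_general [Nontrivial ι] (hd : IsBregmanDivergence S d) (hμ : ∀ a, μ a ∈ S)
    (hne : ∀ a ≠ i₀, μ a ≠ μ i₀) (hc : 0 < c) :
    ∃ Nstar : ι → ℝ,
      ((∀ a, 0 ≤ Nstar a) ∧
        ∀ a ∈ challengers i₀, c ≤ pairIndex d (μ i₀) (μ a) (Nstar i₀) (Nstar a)) ∧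
      (∀ N : ι → ℝ, (∀ a, 0 ≤ N a) →
        (∀ a ∈ challengers i₀, c ≤ pairIndex d (μ i₀) (μ a) (N i₀) (N a)) →
          ∑ a, Nstar a ≤ ∑ a, N a) ∧
      (∀ N : ι → ℝ, (∀ a, 0 ≤ N a) →
        (∀ a ∈ challengers i₀, c ≤ pairIndex d (μ i₀) (μ a) (N i₀) (N a)) →
          ∑ a, N a = ∑ a, Nstar a → N = Nstar) ∧
      (∀ N : ι → ℝ, IsFirstOrder d μ i₀ c N ↔ N = Nstar) ∧
      (∀ a ∈ challengers i₀, c / d (μ i₀) (μ a) ≤ Nstar i₀) ∧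
      (∀ a ∈ challengers i₀, c / d (μ a) (μ i₀) ≤ Nstar a) := by
  obtain ⟨Nstar, hN⟩ := hd.exists_isFirstOrder hμ hne hc
  exact ⟨Nstar, ⟨hN.1, fun a ha => (hN.2.1 a ha).ge⟩,
    fun _ h0 hW => hN.sum_le hd hμ hne hc h0 hW,
    fun _ h0 hW hsum => hN.eq_of_sum_eq hd hμ hne hc h0 hW hsum,
    fun _ => ⟨fun h => hN.unique h hd hμ hne hc, fun h => h ▸ hN⟩,
    fun _ ha => hN.div_le_reference hd hμ hne hc ha,
    fun _ ha => hN.div_le_challenger hd hμ hne hc ha⟩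

end FirstOrder

theorem add_deriv_mul_sub_lt_of_strictConvexOn {S : Set ℝ} {f : ℝ → ℝ} {x y : ℝ}
    (hf : StrictConvexOn ℝ S f) (hx : x ∈ S) (hy : y ∈ S) (hxy : x ≠ y)
    (hfx : DifferentiableAt ℝ f x) : f x + deriv f x * (y - x) < f y := by
  rcases hxy.lt_or_gt with h | h
  · have hslope := hf.deriv_lt_slope hx hy h hfx
    rw [slope_def_field, lt_div_iff₀ (sub_pos.2 h)] at hslope
    linarith
  · have hslope := hf.slope_lt_deriv hy hx h hfx
    rw [slope_def_field, div_lt_iff₀ (sub_pos.2 h)] at hslope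
    linarith

namespace SPEF

variable (F : SPEF) {x y : ℝ}

theorem differentiableAt_b {t : ℝ} (ht : t ∈ F.Θ) : DifferentiableAt ℝ F.b t :=
  (F.b_smooth.contDiffAt (F.Θ_isOpen.mem_nhds ht)).differentiableAt (by simp)

theorem strictConvexOn_b : StrictConvexOn ℝ F.Θ F.b := by
  refine strictConvexOn_of_deriv2_pos' F.Θ_ordConnected.convex F.b_smooth.continuousOn ?_
  simpa only [iteratedDeriv_eq_iterate] using F.b_conv

theorem strictMonoOn_deriv_b : StrictMonoOn (deriv F.b) F.Θ :=
  F.strictConvexOn_b.strictMonoOn_deriv fun _ => F.differentiableAt_b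

theorem ordConnected_S : F.S.OrdConnected :=
  F.Θ_ordConnected.image_deriv fun _ => F.differentiableAt_b

theorem continuousOn_θof : ContinuousOn F.θof F.S :=
  continuousOn_of_rightInvOn_strictMonoOn F.strictMonoOn_deriv_b (Set.mapsTo_image _ _)
    F.θof_mem F.θof_spec F.Θ_ordConnected F.ordConnected_S

theorem continuousOn_d (μ : ℝ) : ContinuousOn (F.d μ) F.S :=
  (((continuousOn_const.sub F.continuousOn_θof).mul continuousOn_const).sub
    continuousOn_const).add (F.b_smooth.continuousOn.comp F.continuousOn_θof F.θof_mem)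

theorem d_pos (hx : x ∈ F.S) (hy : y ∈ F.S) (hxy : x ≠ y) : 0 < F.d x y := by
  have hθ : F.θof x ≠ F.θof y := fun h =>
    hxy (by rw [← F.θof_spec x hx, h, F.θof_spec y hy])
  have htangent := add_deriv_mul_sub_lt_of_strictConvexOn F.strictConvexOn_b (F.θof_mem x hx)
    (F.θof_mem y hy) hθ (F.differentiableAt_b (F.θof_mem x hx))
  rw [F.θof_spec x hx] at htangent
  unfold d
  linarith

theorem isBregmanDivergence : IsBregmanDivergence F.S F.d where
  ordConnected := F.ordConnected_S
  self_eq_zero x _ := by simp [d]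
  pos _ hx _ hy := F.d_pos hx hy
  continuousOn x _ := F.continuousOn_d x
  compensation p _ q _ y _ n m _ _ h := by
    unfold pairIndex d
    linear_combination
      (F.θof y - F.θof (weightedMean p q n m)) * add_mul_weightedMean (p := p) (q := q) h.ne'

end SPEF

/-- the lower bound optimization problem `O` has a unique optimum,
characterized by tight index constraints and the anchor condition, with lower bounds
on the optimal allocations. -/
theorem statement_1 {K : ℕ} [NeZero K] (M : Bandit K) (c : ℝ) (hc : 0 < c) :
    ∃ Nstar : Fin K → ℝ,
      -- feasibility
      ((∀ a, 0 ≤ Nstar a) ∧ (∀ a ∈ alt K, c ≤ M.W a (Nstar 0) (Nstar a))) ∧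
      -- optimality
      (∀ Nv : Fin K → ℝ, (∀ a, 0 ≤ Nv a) → (∀ a ∈ alt K, c ≤ M.W a (Nv 0) (Nv a)) →
        ∑ a, Nstar a ≤ ∑ a, Nv a) ∧
      -- uniqueness of the optimum
      (∀ Nv : Fin K → ℝ, (∀ a, 0 ≤ Nv a) → (∀ a ∈ alt K, c ≤ M.W a (Nv 0) (Nv a)) →
        ∑ a, Nv a = ∑ a, Nstar a → Nv = Nstar) ∧
      -- characterization by the first-order conditions
      (∀ Nv : Fin K → ℝ,
        ((∀ a, 0 ≤ Nv a) ∧ (∀ a ∈ alt K, M.W a (Nv 0) (Nv a) = c) ∧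
          ∑ a ∈ alt K,
            M.d (M.μ 0) (M.x1 a (Nv 0) (Nv a)) / M.d (M.μ a) (M.x1 a (Nv 0) (Nv a)) = 1) ↔
        Nv = Nstar) ∧
      -- lower bounds on the optimal allocations
      (∀ a ∈ alt K, c / M.d (M.μ 0) (M.μ a) ≤ Nstar 0) ∧
      (∀ a ∈ alt K, c / M.d (M.μ a) (M.μ 0) ≤ Nstar a) := by
  have := Fin.nontrivial_iff_two_le.2 M.two_le
  exact statement_1_general M.isBregmanDivergence M.μ_mem (fun a ha => (M.μ_best a ha).ne) hc
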